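/- Let f2 be the function on lines of AG(2,3) with values in GF(2) that takes the value 1 on the two lines {(0,0),(0,1),(0,2)} and {(0,0),(1,0),(2,0)} (which meet at the point (0,0)) and the value 0 on every other line. Then the incidence structure S(f2) is a Steiner triple system of order 19, and its unique Veblen point is the point (*,1). -/

import Mathlib

/-!
Nothing depends on the particular function on lines: for every `f`, the structure `S(f)` is a
Steiner triple system with `(*,1)` as its only Veblen point.

The triples of `S(f)` are governed by a "third point" operation `third f a b`: two distinct points
`a`, `b` lie in the triple `{a, b, third f a b}` (`insert_third_mem`) and in no other
(`eq_of_mem_mem`). This gives the Steiner property, and turns the Veblen condition at `x` into the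
identity `third (third x a) (third x c) = third a c`.

At `(*,1)` the map `third x` flips the `GF(2)`-coordinate; flipping two of the three coordinates of
a triple of type (b) preserves their sum, and on a triple of type (a) the flip just swaps the two
points of the fibre, so the identity holds. At a point `(P,x)`, the
identity projects to `AG(2,3)`, where it would say `Q + R - P = -(Q + R)`, i.e. that `P`, `Q`, `R`
are collinear; non-collinear `Q`, `R` therefore refute it.
-/

universe u v

/-- `T` is the triple set of a Steiner triple system on the point set `α`:
every member of `T` has three elements, and every pair of distinct points
lies in exactly one member of `T`. -/
def IsSTS {α : Type u} (T : Set (Finset α)) : Prop :=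
  (∀ t ∈ T, t.card = 3) ∧
  ∀ a b : α, a ≠ b → ∃! t : Finset α, t ∈ T ∧ a ∈ t ∧ b ∈ t

/-- `x` is a Veblen point of the Steiner triple system with triple set `T`:
whenever `{x,a,b}`, `{x,c,d}` and `{t,a,c}` are triples, so is `{t,b,d}`. -/
def IsVeblen {α : Type u} [DecidableEq α] (T : Set (Finset α)) (x : α) : Prop :=
  ∀ a b c d t : α, ({x, a, b} : Finset α) ∈ T → ({x, c, d} : Finset α) ∈ T →
    ({t, a, c} : Finset α) ∈ T → ({t, b, d} : Finset α) ∈ T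

/-- Isomorphism of Steiner triple systems: a bijection of the point sets carrying
the triples of one system exactly onto the triples of the other. -/
def STSIso {α : Type u} {β : Type v} [DecidableEq β]
    (T₁ : Set (Finset α)) (T₂ : Set (Finset β)) : Prop :=
  ∃ e : α ≃ β, ∀ t : Finset α, t ∈ T₁ ↔ t.image (e : α → β) ∈ T₂

/-- The points of the quotient system at a point `x`: the triples through `x`. -/
abbrev QuotPts {α : Type u} (T : Set (Finset α)) (x : α) : Type u :=
  {t : Finset α // t ∈ T ∧ x ∈ t}

/-- The triples of the quotient system at a Veblen point `x`: three distinct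
triples `T1`, `T2`, `T3` through `x` form a triple iff there are `a ∈ T1 \ {x}`
and `c ∈ T2 \ {x}` such that the third point of the triple through `a` and `c`
lies in `T3`. -/
def QuotTriples {α : Type u} [DecidableEq α] (T : Set (Finset α)) (x : α) :
    Set (Finset (QuotPts T x)) :=
  {b | ∃ T1 T2 T3 : QuotPts T x, T1 ≠ T2 ∧ T1 ≠ T3 ∧ T2 ≠ T3 ∧ b = {T1, T2, T3} ∧
      ∃ a ∈ T1.1, a ≠ x ∧ ∃ c ∈ T2.1, c ≠ x ∧
        ∃ d, ({a, c, d} : Finset α) ∈ T ∧ d ∈ T3.1}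

/-- The nonzero vectors of `GF(2)^n`, i.e. the points of `PG(n-1,2)`. -/
abbrev PGPt (n : ℕ) : Type := {u : Fin n → ZMod 2 // u ≠ 0}

/-- The lines of `PG(n-1,2)`: sets `{u,v,w}` of distinct nonzero vectors of
`GF(2)^n` with `u + v + w = 0`. -/
def PGTriples (n : ℕ) : Set (Finset (PGPt n)) :=
  {t | ∃ u v w : PGPt n, u ≠ v ∧ u ≠ w ∧ v ≠ w ∧ t = {u, v, w} ∧
      u.1 + v.1 + w.1 = 0}

/-- The system contains a Pasch configuration: six distinct points
`x, a, b, c, d, t` with `{x,a,b}`, `{x,c,d}`, `{t,a,c}`, `{t,b,d}` all triples. -/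
def HasPasch {α : Type u} [DecidableEq α] (T : Set (Finset α)) : Prop :=
  ∃ x a b c d t : α, ({x, a, b, c, d, t} : Finset α).card = 6 ∧
    ({x, a, b} : Finset α) ∈ T ∧ ({x, c, d} : Finset α) ∈ T ∧
    ({t, a, c} : Finset α) ∈ T ∧ ({t, b, d} : Finset α) ∈ T

/-- The points of the affine plane `AG(2,3)`. -/
abbrev AGPt : Type := ZMod 3 × ZMod 3

/-- `L` is a line of `AG(2,3)`: a 3-element subset `{P,Q,R}` of `GF(3)^2`
with `P + Q + R = 0`. -/
def AGLine (L : Finset AGPt) : Prop :=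
  ∃ P Q R : AGPt, P ≠ Q ∧ P ≠ R ∧ Q ≠ R ∧ L = {P, Q, R} ∧ P + Q + R = 0

/-- The point set of the extension construction: the extra point `(*,1)`
(encoded as `none`) together with `GF(3)^2 × GF(2)`. -/
abbrev SPt19 : Type := Option (AGPt × ZMod 2)

/-- The triples of the incidence structure `S(f)` associated with a function `f`
on the lines of `AG(2,3)` with values in `GF(2)`:
(a) `{(*,1), (P,0), (P,1)}` for each point `P` of `AG(2,3)`, and
(b) `{(P,x), (Q,y), (R,z)}` for each line `{P,Q,R}` of `AG(2,3)` and
`x, y, z ∈ GF(2)` with `x + y + z = f {P,Q,R}`. -/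
def STrip19 (f : Finset AGPt → ZMod 2) : Set (Finset SPt19) :=
  {t | (∃ P : AGPt, t = {none, some (P, 0), some (P, 1)}) ∨
       (∃ (P Q R : AGPt) (x y z : ZMod 2), P ≠ Q ∧ P ≠ R ∧ Q ≠ R ∧ P + Q + R = 0 ∧
          x + y + z = f ({P, Q, R} : Finset AGPt) ∧
          t = {some (P, x), some (Q, y), some (R, z)})}

/-- The line `{(0,0),(0,1),(0,2)}` of `AG(2,3)`. -/
def agLine1 : Finset AGPt := {(0, 0), (0, 1), (0, 2)}

/-- The line `{(0,0),(1,0),(2,0)}` of `AG(2,3)`. -/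
def agLine2 : Finset AGPt := {(0, 0), (1, 0), (2, 0)}

/-- The function on lines which is identically `0`. -/
def agf0 : Finset AGPt → ZMod 2 := fun _ => 0

/-- The function on lines taking the value `1` exactly on `{(0,0),(0,1),(0,2)}`. -/
def agf1 : Finset AGPt → ZMod 2 := fun L => if L = agLine1 then 1 else 0

/-- The function on lines taking the value `1` exactly on the two lines
`{(0,0),(0,1),(0,2)}` and `{(0,0),(1,0),(2,0)}`. -/
def agf2 : Finset AGPt → ZMod 2 := fun L => if L = agLine1 ∨ L = agLine2 then 1 else 0

/-- The third point of the triple of `S(f)` through two distinct points. On a repeated point the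
value is that point itself. -/
def third (f : Finset AGPt → ZMod 2) : SPt19 → SPt19 → SPt19
  | none, none => none
  | none, some (P, x) => some (P, x + 1)
  | some (P, x), none => some (P, x + 1)
  | some (P, x), some (Q, y) =>
    if P = Q then (if x = y then some (P, x) else none)
    else some (-(P + Q), f {P, Q, -(P + Q)} + x + y)

lemma zmod2_cases (x : ZMod 2) : x = 0 ∨ x = 1 := by
  revert x; decide

/-- The third point of the line through two distinct points of `AG(2,3)` differs from both. -/
lemma ag_third_ne {P Q : AGPt} (h : P ≠ Q) : P ≠ -(P + Q) ∧ Q ≠ -(P + Q) := by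
  revert P Q; decide

lemma fiber_mem (f : Finset AGPt → ZMod 2) (P : AGPt) (x : ZMod 2) :
    ({none, some (P, x), some (P, x + 1)} : Finset SPt19) ∈ STrip19 f := by
  refine Or.inl ⟨P, ?_⟩
  rcases zmod2_cases x with rfl | rfl
  · rfl
  · rw [show (1 + 1 : ZMod 2) = 0 by decide, Finset.pair_comm]

lemma insert_third_mem (f : Finset AGPt → ZMod 2) {a b : SPt19} (h : a ≠ b) :
    ({a, b, third f a b} : Finset SPt19) ∈ STrip19 f := by
  rcases a with _ | ⟨P, x⟩ <;> rcases b with _ | ⟨Q, y⟩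
  · exact absurd rfl h
  · exact fiber_mem f Q y
  · rw [Finset.insert_comm]
    exact fiber_mem f P x
  · by_cases hPQ : P = Q
    · subst hPQ
      have hxy : x ≠ y := fun e => h (by rw [e])
      have hy : y = x + 1 := by clear h; revert x y; decide
      have e : third f (some (P, x)) (some (P, y)) = none := by simp [third, hxy]
      have e' : ({some (P, x), some (P, y), none} : Finset SPt19)
          = {none, some (P, x), some (P, y)} := by
        ext; simp; tauto
      rw [e, e', hy]
      exact fiber_mem f P x
    · obtain ⟨h1, h2⟩ := ag_third_ne hPQ
      refine Or.inr ⟨P, Q, -(P + Q), x, y, f {P, Q, -(P + Q)} + x + y, hPQ, h1, h2,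
        add_neg_cancel _, ?_, ?_⟩
      · generalize f {P, Q, -(P + Q)} = w
        clear h; revert x y w; decide
      · simp [third, hPQ]

lemma card_of_mem {f : Finset AGPt → ZMod 2} {t : Finset SPt19} (ht : t ∈ STrip19 f) :
    t.card = 3 := by
  rcases ht with ⟨P, rfl⟩ | ⟨P, Q, R, x, y, z, h1, h2, h3, -, -, rfl⟩
  · exact Finset.card_eq_three.2 ⟨_, _, _, by simp, by simp, by simp, rfl⟩
  · exact Finset.card_eq_three.2 ⟨_, _, _, by simp [h1], by simp [h2], by simp [h3], rfl⟩

lemma third_of_line {f : Finset AGPt → ZMod 2} {P Q R : AGPt} {x y z : ZMod 2} (h : P ≠ Q)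
    (hs : P + Q + R = 0) (hf : x + y + z = f {P, Q, R}) :
    third f (some (P, x)) (some (Q, y)) = some (R, z) := by
  have hR : R = -(P + Q) := (neg_eq_of_add_eq_zero_right hs).symm
  have hz : f {P, Q, R} + x + y = z := by
    rw [← hf]; clear hf; revert x y z; decide
  simp [third, h, ← hR, hz]

lemma eq_of_mem_mem {f : Finset AGPt → ZMod 2} {t : Finset SPt19} (ht : t ∈ STrip19 f)
    {a b : SPt19} (ha : a ∈ t) (hb : b ∈ t) (h : a ≠ b) : t = {a, b, third f a b} := by
  rcases ht with ⟨P, rfl⟩ | ⟨P, Q, R, x, y, z, h1, h2, h3, hs, hf, rfl⟩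
  · have h11 : (1 + 1 : ZMod 2) = 0 := by decide
    simp only [Finset.mem_insert, Finset.mem_singleton] at ha hb
    rcases ha with rfl | rfl | rfl <;> rcases hb with rfl | rfl | rfl <;>
      first
      | exact absurd rfl h
      | (ext; simp [third, h11]; try tauto)
  · simp only [Finset.mem_insert, Finset.mem_singleton] at ha hb
    -- The relations `hs` and `hf` are symmetric in the three points of the triple.
    have e12 := third_of_line h1 hs hf
    have e21 : third f (some (Q, y)) (some (P, x)) = some (R, z) :=
      third_of_line h1.symm (by rw [← hs]; abel)
        (by rw [Finset.insert_comm, ← hf]; ring)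
    have e13 : third f (some (P, x)) (some (R, z)) = some (Q, y) :=
      third_of_line h2 (by rw [← hs]; abel)
        (by rw [Finset.pair_comm, ← hf]; ring)
    have e31 : third f (some (R, z)) (some (P, x)) = some (Q, y) :=
      third_of_line h2.symm (by rw [← hs]; abel)
        (by rw [Finset.insert_comm, Finset.pair_comm, ← hf]; ring)
    have e23 : third f (some (Q, y)) (some (R, z)) = some (P, x) :=
      third_of_line h3 (by rw [← hs]; abel)
        (by rw [Finset.pair_comm, Finset.insert_comm, ← hf]; ring)
    have e32 : third f (some (R, z)) (some (Q, y)) = some (P, x) :=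
      third_of_line h3.symm (by rw [← hs]; abel)
        (by rw [Finset.pair_comm, Finset.insert_comm, Finset.pair_comm, ← hf]; ring)
    rcases ha with rfl | rfl | rfl <;> rcases hb with rfl | rfl | rfl <;>
      first
      | exact absurd rfl h
      | (simp only [e12, e21, e13, e31, e23, e32]
         try (ext; simp only [Finset.mem_insert, Finset.mem_singleton]; tauto))

lemma triple_mem_iff {f : Finset AGPt → ZMod 2} {a b c : SPt19} :
    ({a, b, c} : Finset SPt19) ∈ STrip19 f ↔ a ≠ b ∧ c = third f a b := by
  constructor
  · intro h
    have hc := card_of_mem h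
    have hab : a ≠ b := by
      rintro rfl
      have := Finset.card_le_two (a := a) (b := c)
      simp only [Finset.insert_idem] at hc
      omega
    refine ⟨hab, ?_⟩
    have he := eq_of_mem_mem h (a := a) (b := b) (by simp) (by simp) hab
    have hmem : c ∈ ({a, b, third f a b} : Finset SPt19) := by rw [← he]; simp
    simp only [Finset.mem_insert, Finset.mem_singleton] at hmem
    -- If `c` coincided with `a` or `b`, the triple would have only two elements.
    have h2 := Finset.card_le_two (a := a) (b := b)
    rcases hmem with rfl | rfl | hmem
    · rw [Finset.pair_comm, Finset.insert_idem] at hc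
      omega
    · rw [Finset.pair_eq_singleton] at hc
      omega
    · exact hmem
  · rintro ⟨h, rfl⟩
    exact insert_third_mem f h

lemma isSTS (f : Finset AGPt → ZMod 2) : IsSTS (STrip19 f) :=
  ⟨fun _ ht => card_of_mem ht, fun a b h =>
    ⟨{a, b, third f a b}, ⟨insert_third_mem f h, by simp, by simp⟩,
      fun _ ht => eq_of_mem_mem ht.1 ht.2.1 ht.2.2 h⟩⟩

lemma isVeblen_none (f : Finset AGPt → ZMod 2) : IsVeblen (STrip19 f) none := by
  intro a b c d t hab hcd ht
  have rot (u v w : SPt19) : ({u, v, w} : Finset SPt19) = {v, w, u} := by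
    ext; simp; tauto
  rw [rot, triple_mem_iff] at ht ⊢
  rw [triple_mem_iff] at hab hcd
  obtain ⟨ha, rfl⟩ := hab
  obtain ⟨hc, rfl⟩ := hcd
  obtain ⟨hac, rfl⟩ := ht
  rcases a with _ | ⟨P, x⟩
  · exact absurd rfl ha
  rcases c with _ | ⟨Q, y⟩
  · exact absurd rfl hc
  by_cases hPQ : P = Q
  · subst hPQ
    have hxy : x ≠ y := fun e => hac (by rw [e])
    simp [third, hxy]
  · have hw (w : ZMod 2) : w + x + y = w + (x + 1) + (y + 1) := by
      clear ha hc hac; revert x y w; decide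
    simp only [third, hPQ, if_false]
    exact ⟨by simp [hPQ], by rw [← hw]⟩

lemma not_isVeblen_some (f : Finset AGPt → ZMod 2) (P : AGPt) (x : ZMod 2) :
    ¬ IsVeblen (STrip19 f) (some (P, x)) := by
  intro h
  -- `P`, `Q`, `R` are not collinear.
  obtain ⟨Q, R, hPQ, hPR, hQR, hST, hne⟩ : ∃ Q R : AGPt, P ≠ Q ∧ P ≠ R ∧ Q ≠ R ∧
      -(P + Q) ≠ -(P + R) ∧ -(Q + R) ≠ -(-(P + Q) + -(P + R)) :=
    ⟨P + (1, 0), P + (0, 1), by clear h; revert P; decide⟩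
  have rot (u v w : SPt19) : ({u, v, w} : Finset SPt19) = {v, w, u} := by
    ext; simp; tauto
  have key := h (some (Q, 0)) _ (some (R, 0)) _ (third f (some (Q, 0)) (some (R, 0)))
    (insert_third_mem f (by simp [hPQ])) (insert_third_mem f (by simp [hPR]))
    (by rw [rot]; exact insert_third_mem f (by simp [hQR]))
  rw [rot, triple_mem_iff] at key
  have e := key.2
  simp only [third, hPQ, hPR, hQR, hST, if_false, Option.some.injEq, Prod.mk.injEq] at e
  exact hne e.1

/-- For the function `f2` taking the value `1` exactly on the two lines
`{(0,0),(0,1),(0,2)}` and `{(0,0),(1,0),(2,0)}` of `AG(2,3)` (which meet at the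
point `(0,0)`), the structure `S(f2)` is a Steiner triple system of order 19
whose unique Veblen point is `(*,1)`. -/
theorem sts19_from_f2 :
    Fintype.card SPt19 = 19 ∧ IsSTS (STrip19 agf2) ∧
    IsVeblen (STrip19 agf2) (none : SPt19) ∧
    ∀ y : SPt19, IsVeblen (STrip19 agf2) y → y = none := by
  refine ⟨by simp [SPt19, AGPt, ZMod.card], isSTS agf2, isVeblen_none agf2, ?_⟩
  rintro (_ | ⟨P, x⟩) h
  · rfl
  · exact absurd h (not_isVeblen_some agf2 P x)
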